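/- Let (M, Ω) be a 2n-dimensional symplectic manifold and φ: N → M a smooth symplectic immersion of a 2k-dimensional manifold N. Let ∇ be a symplectic connection on (M, Ω) and ∇̄ the induced symplectic connection on (N, φ^*(Ω)) with second fundamental form Π. If ∇ has constant symplectic sectional curvature, then (k+1)·φ^*(Ric^∇)_{ij} = (n+1)·(R̄_{ij} + smc_{ij}), where R̄_{ij} is the Ricci curvature of ∇̄ and smc_{ij} = ω^{ab}Ω_{AB}Π_{ia}{}^AΠ_{jb}{}^B with ω^{ij} the bivector inverse to ω_{ij} = φ^*(Ω)_{ij}. In particular, if smc_{ij} = 0 then the Ricci curvature of ∇̄ equals (k+1)/(n+1) times the pullback of the Ricci curvature of ∇. -/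

import Mathlib

/- Chart model of a symplectic manifold: the manifold is modeled by (a global affine chart of)
a finite-dimensional real normed vector space `E`; a symplectic form is a smooth field of
nondegenerate antisymmetric bilinear forms (closedness is automatic in the presence of a
compatible torsion-free connection), and a symplectic connection is recorded by its
(torsion-free) Christoffel symbols, preserving the symplectic form. -/

structure SympForm (E : Type*) [NormedAddCommGroup E] [NormedSpace ℝ E] where
  ω : E → E →L[ℝ] E →L[ℝ] ℝ
  smooth : ContDiff ℝ (⊤ : ℕ∞) ω
  skew : ∀ x u v, ω x u v = - ω x v u
  nondeg : ∀ x u, (∀ v, ω x u v = 0) → u = 0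

structure SympConnection {E : Type*} [NormedAddCommGroup E] [NormedSpace ℝ E]
    (Ω : SympForm E) where
  Γ : E → E →L[ℝ] E →L[ℝ] E
  smooth : ContDiff ℝ (⊤ : ℕ∞) Γ
  symm : ∀ x u v, Γ x u v = Γ x v u
  parallel : ∀ x u v w, fderiv ℝ Ω.ω x u v w = Ω.ω x (Γ x u v) w + Ω.ω x v (Γ x u w)

variable {E : Type*} [NormedAddCommGroup E] [NormedSpace ℝ E]

/-- Curvature `R(u,v)w = ∇_u∇_v w - ∇_v∇_u w - ∇_{[u,v]}w` of a symplectic connection,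
evaluated on constant vector fields of the chart, as an operator in `w`. -/
noncomputable def curvOp {Ω : SympForm E} (C : SympConnection Ω) (x u v : E) : E →L[ℝ] E :=
  fderiv ℝ C.Γ x u v - fderiv ℝ C.Γ x v u
    + (C.Γ x u).comp (C.Γ x v) - (C.Γ x v).comp (C.Γ x u)

/-- Lowered curvature `R_{ijkl} = R_{ijk}{}^p Ω_{pl}`, i.e. `Ω(R(u,v)w, z)`. -/
noncomputable def Rlow {Ω : SympForm E} (C : SympConnection Ω) (x u v w z : E) : ℝ :=
  Ω.ω x (curvOp C x u v w) z

/-- The symplectic curvature quadratic form `scurv_{x,L}(Z)` of the plane `L` spanned by `X, Y`. -/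
noncomputable def scurv {Ω : SympForm E} (C : SympConnection Ω) (x X Y Z : E) : ℝ :=
  Rlow C x X Y Z Z / Ω.ω x X Y

/-- Ricci tensor `R_{ij} = R_{pij}{}^p`: the trace of `w ↦ R(w,u)v`. -/
noncomputable def ricci {Ω : SympForm E} (C : SympConnection Ω) (x u v : E) : ℝ :=
  LinearMap.trace ℝ E
    ((((fderiv ℝ C.Γ x).flip u).flip v - ((fderiv ℝ C.Γ x) u).flip v
      + (C.Γ x).flip (C.Γ x u v) - (C.Γ x u).comp ((C.Γ x).flip v)).toLinearMap)

/-- Covariant derivative `(∇_w Ric)(u,v)` of the Ricci tensor. -/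
noncomputable def covDerivRic {Ω : SympForm E} (C : SympConnection Ω) (x w u v : E) : ℝ :=
  fderiv ℝ (fun y => ricci C y u v) x w - ricci C x (C.Γ x w u) v - ricci C x u (C.Γ x w v)

/-- Covariant derivative `(∇_a R)(u,v,w,z)` of the (lowered) curvature tensor. -/
noncomputable def covDerivR {Ω : SympForm E} (C : SympConnection Ω) (x a u v w z : E) : ℝ :=
  fderiv ℝ (fun y => Rlow C y u v w z) x a
    - Rlow C x (C.Γ x a u) v w z - Rlow C x u (C.Γ x a v) w z
    - Rlow C x u v (C.Γ x a w) z - Rlow C x u v w (C.Γ x a z)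

/-- `∇` is locally symmetric: `∇R = 0`. -/
def LocallySymmetric {Ω : SympForm E} (C : SympConnection Ω) : Prop :=
  ∀ x a u v w z, covDerivR C x a u v w z = 0

/-- The Ricci tensor is parallel. -/
def ParallelRicci {Ω : SympForm E} (C : SympConnection Ω) : Prop :=
  ∀ x w u v, covDerivRic C x w u v = 0

/-- The symplectic Weyl tensor
`W_{ijkl} = R_{ijkl} − (1/(n+1))(Ω_{i(k}R_{l)j} − Ω_{j(k}R_{l)i} + Ω_{ij}R_{kl})`
on a manifold of dimension `2n`. -/
noncomputable def weyl (n : ℕ) {Ω : SympForm E} (C : SympConnection Ω) (x u v w z : E) : ℝ :=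
  Rlow C x u v w z - (1 / ((n : ℝ) + 1)) *
    ((Ω.ω x u w * ricci C x z v + Ω.ω x u z * ricci C x w v) / 2
      - (Ω.ω x v w * ricci C x z u + Ω.ω x v z * ricci C x w u) / 2
      + Ω.ω x u v * ricci C x w z)

/-- `∇` is Weyl flat (of Ricci type): its symplectic Weyl tensor vanishes. -/
def WeylFlat (n : ℕ) {Ω : SympForm E} (C : SympConnection Ω) : Prop :=
  ∀ x u v w z, weyl n C x u v w z = 0

/-- `∇` is preferred: `∇_{(i}R_{jk)} = 0` (cyclic symmetrization suffices since `Ric` is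
symmetric in its last two arguments). -/
def Preferred {Ω : SympForm E} (C : SympConnection Ω) : Prop :=
  ∀ x u v w, covDerivRic C x u v w + covDerivRic C x v w u + covDerivRic C x w u v = 0

/-- Vanishing of the curvature one-form `ρ_i = ∇^p R_{ip}`: the index is raised with `Ω`, and
the `Ω`-contraction is encoded as the trace of any linear packaging `D` of `∇Ric` against `Ω`
(such a `D` exists and is unique by nondegeneracy of `Ω`). -/
def RhoZero {Ω : SympForm E} (C : SympConnection Ω) : Prop :=
  ∀ x u, ∀ D : E →ₗ[ℝ] E,
    (∀ w v, Ω.ω x (D w) v = covDerivRic C x w u v) → LinearMap.trace ℝ E D = 0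

/-- `A` is a parallel symmetric covariant 2-tensor field. -/
def IsParallelSym2 {Ω : SympForm E} (C : SympConnection Ω)
    (A : E → E →L[ℝ] E →L[ℝ] ℝ) : Prop :=
  (∀ x u v, A x u v = A x v u) ∧ Differentiable ℝ A ∧
    ∀ x u v w, fderiv ℝ A x u v w = A x (C.Γ x u v) w + A x v (C.Γ x u w)

/-- `∇` has constant symplectic sectional curvature: there is a parallel symmetric 2-tensor `A`
such that on every 2-dimensional symplectic subspace (spanned by `X, Y` with `Ω(X,Y) ≠ 0`)
the symplectic curvature quadratic form is the restriction of the quadratic form of `A`. -/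
def HasConstScurv {Ω : SympForm E} (C : SympConnection Ω) : Prop :=
  ∃ A : E → E →L[ℝ] E →L[ℝ] ℝ, IsParallelSym2 C A ∧
    ∀ x X Y, Ω.ω x X Y ≠ 0 →
      ∀ Z ∈ Submodule.span ℝ ({X, Y} : Set E), scurv C x X Y Z = A x Z Z

/-- Lie bracket of vector fields on the chart. -/
noncomputable def lieVF (X Y : E → E) (x : E) : E :=
  fderiv ℝ Y x (X x) - fderiv ℝ X x (Y x)

/-- Covariant derivative `∇_X Y` of vector fields on the chart. -/
noncomputable def covVF {Ω : SympForm E} (C : SympConnection Ω) (X Y : E → E) (x : E) : E :=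
  fderiv ℝ Y x (X x) + C.Γ x (X x) (Y x)

/-- Nijenhuis tensor of an endomorphism field, evaluated on constant vector fields. -/
noncomputable def nijTensor (A : E → E → E) (x u v : E) : E :=
  lieVF (fun y => A y u) (fun y => A y v) x
    - A x (lieVF (fun y => A y u) (fun _ => v) x)
    - A x (lieVF (fun _ => u) (fun y => A y v) x)
    + A x (A x (lieVF (fun _ => u) (fun _ => v) x))

/-- Covariant derivative along a curve `γ` of a field `V` along `γ`. -/
noncomputable def covAlong {Ω : SympForm E} (C : SympConnection Ω) (γ V : ℝ → E) (t : ℝ) : E :=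
  deriv V t + C.Γ (γ t) (deriv γ t) (V t)

/-- `(g,J,Ω)` has constant (para-)holomorphic sectional curvature `4c`:
`R_{ijkl} = 2c(Ω_{i(k}g_{l)j} − Ω_{j(k}g_{l)i} + Ω_{ij}g_{kl})`. -/
def ConstHoloSec {Ω : SympForm E} (C : SympConnection Ω) (g : E → E → E → ℝ) (c : ℝ) : Prop :=
  ∀ x u v w z, Rlow C x u v w z =
    2 * c * ((Ω.ω x u w * g x z v + Ω.ω x u z * g x w v) / 2
      - (Ω.ω x v w * g x z u + Ω.ω x v z * g x w u) / 2
      + Ω.ω x u v * g x w z)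

/-- `C` is the Levi-Civita connection of the metric `g`: `C` is torsion free and `∇g = 0`. -/
def IsLeviCivita {Ω : SympForm E} (C : SympConnection Ω) (g : E → E → E → ℝ) : Prop :=
  ∀ x u v w, fderiv ℝ (fun y => g y v w) x u = g x (C.Γ x u v) w + g x v (C.Γ x u w)

section Helpers

theorem aux_fderiv_bilin {F G H K : Type*} [NormedAddCommGroup F] [NormedSpace ℝ F]
    [NormedAddCommGroup G] [NormedSpace ℝ G] [NormedAddCommGroup H] [NormedSpace ℝ H]
    [NormedAddCommGroup K] [NormedSpace ℝ K]
    {B : F → G →L[ℝ] H →L[ℝ] K} {V : F → G} {Z : F → H} {x : F}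
    (hB : DifferentiableAt ℝ B x) (hV : DifferentiableAt ℝ V x) (hZ : DifferentiableAt ℝ Z x)
    (u : F) :
    fderiv ℝ (fun y => B y (V y) (Z y)) x u
      = fderiv ℝ B x u (V x) (Z x) + B x (fderiv ℝ V x u) (Z x) + B x (V x) (fderiv ℝ Z x u) := by
  have h := ((hB.hasFDerivAt.clm_apply hV.hasFDerivAt).clm_apply hZ.hasFDerivAt).fderiv
  rw [h]
  simp
  abel

theorem aux_diff_bilin {F G H K : Type*} [NormedAddCommGroup F] [NormedSpace ℝ F]
    [NormedAddCommGroup G] [NormedSpace ℝ G] [NormedAddCommGroup H] [NormedSpace ℝ H]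
    [NormedAddCommGroup K] [NormedSpace ℝ K]
    {B : F → G →L[ℝ] H →L[ℝ] K} {V : F → G} {Z : F → H} {x : F}
    (hB : DifferentiableAt ℝ B x) (hV : DifferentiableAt ℝ V x) (hZ : DifferentiableAt ℝ Z x) :
    DifferentiableAt ℝ (fun y => B y (V y) (Z y)) x :=
  (hB.clm_apply hV).clm_apply hZ

theorem aux_diff_fderiv {F G : Type*} [NormedAddCommGroup F] [NormedSpace ℝ F]
    [NormedAddCommGroup G] [NormedSpace ℝ G] {f : F → G} (hf : ContDiff ℝ (⊤ : ℕ∞) f) :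
    ContDiff ℝ (⊤ : ℕ∞) (fderiv ℝ f) :=
  hf.fderiv_right (by simp)

theorem aux_diff {F G : Type*} [NormedAddCommGroup F] [NormedSpace ℝ F]
    [NormedAddCommGroup G] [NormedSpace ℝ G] {f : F → G} (hf : ContDiff ℝ (⊤ : ℕ∞) f) (x : F) :
    DifferentiableAt ℝ f x :=
  (hf.differentiable (by simp)) x

theorem aux_symm2 {F G : Type*} [NormedAddCommGroup F] [NormedSpace ℝ F]
    [NormedAddCommGroup G] [NormedSpace ℝ G] {f : F → G} (hf : ContDiff ℝ (⊤ : ℕ∞) f)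
    (x u v : F) : fderiv ℝ (fderiv ℝ f) x u v = fderiv ℝ (fderiv ℝ f) x v u := by
  have h : IsSymmSndFDerivAt ℝ f x :=
    hf.contDiffAt.isSymmSndFDerivAt (by
      rw [minSmoothness_of_isRCLikeNormedField]
      exact WithTop.coe_le_coe.2 (le_top : (2 : ℕ∞) ≤ ⊤))
  exact h u v

theorem aux_fderiv_const {F G H : Type*} [NormedAddCommGroup F] [NormedSpace ℝ F]
    [NormedAddCommGroup G] [NormedSpace ℝ G] [NormedAddCommGroup H] [NormedSpace ℝ H]
    {B : F → G →L[ℝ] H} {x : F} (hB : DifferentiableAt ℝ B x) (v : G) (u : F) :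
    fderiv ℝ (fun y => B y v) x u = fderiv ℝ B x u v := by
  have h := (hB.hasFDerivAt.clm_apply (hasFDerivAt_const v x)).fderiv
  rw [h]; simp

theorem aux_fderiv_const2 {F G H K : Type*} [NormedAddCommGroup F] [NormedSpace ℝ F]
    [NormedAddCommGroup G] [NormedSpace ℝ G] [NormedAddCommGroup H] [NormedSpace ℝ H]
    [NormedAddCommGroup K] [NormedSpace ℝ K]
    {B : F → G →L[ℝ] H →L[ℝ] K} {x : F} (hB : DifferentiableAt ℝ B x) (v : G) (w : H) (u : F) :
    fderiv ℝ (fun y => B y v w) x u = fderiv ℝ B x u v w := by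
  rw [aux_fderiv_bilin hB (differentiableAt_const v) (differentiableAt_const w)]
  simp

variable {E F : Type*} [NormedAddCommGroup E] [NormedSpace ℝ E]
  [NormedAddCommGroup F] [NormedSpace ℝ F]

theorem aux_curv_apply {Ω : SympForm E} (C : SympConnection Ω) (x u v w : E) :
    curvOp C x u v w = fderiv ℝ C.Γ x u v w - fderiv ℝ C.Γ x v u w
      + C.Γ x u (C.Γ x v w) - C.Γ x v (C.Γ x u w) := by
  simp [curvOp]

theorem aux_dGamma_symm {Ω : SympForm E} (C : SympConnection Ω) (x a u v : E) :
    fderiv ℝ C.Γ x a u v = fderiv ℝ C.Γ x a v u := by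
  rw [← aux_fderiv_const2 (aux_diff C.smooth x), ← aux_fderiv_const2 (aux_diff C.smooth x)]
  simp_rw [C.symm _ u v]

theorem aux_R_antisymm {Ω : SympForm E} (C : SympConnection Ω) (x u v w z : E) :
    Rlow C x u v w z = - Rlow C x v u w z := by
  simp only [Rlow, aux_curv_apply]
  simp
  ring

theorem aux_R_bianchi {Ω : SympForm E} (C : SympConnection Ω) (x u v w z : E) :
    Rlow C x u v w z + Rlow C x v w u z + Rlow C x w u v z = 0 := by
  simp only [Rlow, aux_curv_apply]
  rw [aux_dGamma_symm C x u w v, aux_dGamma_symm C x v w u, aux_dGamma_symm C x w v u,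
    C.symm x v u, C.symm x w u, C.symm x w v]
  simp
  ring

set_option synthInstance.maxHeartbeats 400000 in
set_option maxSynthPendingDepth 10 in
theorem aux_R_symm {Ω : SympForm E} (C : SympConnection Ω) (x u v w z : E) :
    Rlow C x u v w z = Rlow C x u v z w := by
  have hΩ := aux_diff Ω.smooth x
  have hΓ := aux_diff C.smooth x
  have key : ∀ t u, fderiv ℝ (fderiv ℝ Ω.ω) x t u w z
      = fderiv ℝ Ω.ω x t (C.Γ x u w) z + Ω.ω x (fderiv ℝ C.Γ x t u w) z
        + (fderiv ℝ Ω.ω x t w (C.Γ x u z) + Ω.ω x w (fderiv ℝ C.Γ x t u z)) := by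
    intro t u
    have d1 : DifferentiableAt ℝ (fderiv ℝ Ω.ω) x := aux_diff (aux_diff_fderiv Ω.smooth) x
    have d2 : DifferentiableAt ℝ (fun y => fderiv ℝ Ω.ω y u) x :=
      d1.clm_apply (differentiableAt_const u)
    have dG : ∀ w, DifferentiableAt ℝ (fun y => C.Γ y u w) x := fun w =>
      aux_diff_bilin hΓ (differentiableAt_const u) (differentiableAt_const w)
    have e : fderiv ℝ (fun y => fderiv ℝ Ω.ω y u w z) x t
        = fderiv ℝ (fun y => Ω.ω y (C.Γ y u w) z + Ω.ω y w (C.Γ y u z)) x t := by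
      simp_rw [C.parallel]
    rw [aux_fderiv_const2 d2, aux_fderiv_const d1] at e
    rw [e, fderiv_fun_add (aux_diff_bilin hΩ (dG w) (differentiableAt_const z))
      (aux_diff_bilin hΩ (differentiableAt_const w) (dG z)), _root_.add_apply,
      aux_fderiv_bilin hΩ (dG w) (differentiableAt_const z),
      aux_fderiv_bilin hΩ (differentiableAt_const w) (dG z),
      aux_fderiv_const2 hΓ, aux_fderiv_const2 hΓ]
    simp
  have h1 := key u v
  have h2 := key v u
  rw [aux_symm2 Ω.smooth x u v, h2] at h1
  simp only [C.parallel] at h1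
  simp only [Rlow, aux_curv_apply]
  rw [Ω.skew x _ w]
  simp only [map_add, map_sub, _root_.add_apply, _root_.sub_apply]
  linarith

theorem aux_gauss {Ω : SympForm E} (C : SympConnection Ω)
    (φ : F → E) (hφ : ContDiff ℝ (⊤ : ℕ∞) φ) (ΩN : SympForm F)
    (hΩN : ∀ x u v, ΩN.ω x u v = Ω.ω (φ x) (fderiv ℝ φ x u) (fderiv ℝ φ x v))
    (CN : SympConnection ΩN) (sff : F → F → F → E)
    (hdecomp : ∀ x u v,
      fderiv ℝ (fun y => fderiv ℝ φ y v) x u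
        + C.Γ (φ x) (fderiv ℝ φ x u) (fderiv ℝ φ x v)
      = fderiv ℝ φ x (CN.Γ x u v) + sff x u v)
    (hperp : ∀ x u v w, Ω.ω (φ x) (sff x u v) (fderiv ℝ φ x w) = 0)
    (x u v w z : F) :
    Rlow C (φ x) (fderiv ℝ φ x u) (fderiv ℝ φ x v) (fderiv ℝ φ x w) (fderiv ℝ φ x z)
      = Rlow CN x u v w z - Ω.ω (φ x) (sff x v w) (sff x u z)
        + Ω.ω (φ x) (sff x u w) (sff x v z) := by
  have s1 : ContDiff ℝ (⊤ : ℕ∞) (fderiv ℝ φ) := aux_diff_fderiv hφ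
  have s2 : ContDiff ℝ (⊤ : ℕ∞) (fderiv ℝ (fderiv ℝ φ)) := aux_diff_fderiv s1
  have hd : ∀ y u v, fderiv ℝ (fun y => fderiv ℝ φ y v) y u = fderiv ℝ (fderiv ℝ φ) y u v :=
    fun y u v => aux_fderiv_const (aux_diff s1 y) v u
  simp only [hd] at hdecomp
  have d0 := aux_diff hφ x
  have d1 := aux_diff s1 x
  have d2 := aux_diff s2 x
  have dΩ : DifferentiableAt ℝ (fun y => Ω.ω (φ y)) x := (aux_diff Ω.smooth (φ x)).comp x d0
  have dΓ : DifferentiableAt ℝ (fun y => C.Γ (φ y)) x := (aux_diff C.smooth (φ x)).comp x d0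
  have cΩ : ∀ u, fderiv ℝ (fun y => Ω.ω (φ y)) x u = fderiv ℝ Ω.ω (φ x) (fderiv ℝ φ x u) := by
    intro u
    rw [show (fun y => Ω.ω (φ y)) = Ω.ω ∘ φ from rfl, fderiv_comp x (aux_diff Ω.smooth (φ x)) d0]
    rfl
  have cΓ : ∀ u, fderiv ℝ (fun y => C.Γ (φ y)) x u = fderiv ℝ C.Γ (φ x) (fderiv ℝ φ x u) := by
    intro u
    rw [show (fun y => C.Γ (φ y)) = C.Γ ∘ φ from rfl, fderiv_comp x (aux_diff C.smooth (φ x)) d0]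
    rfl
  have dN := aux_diff ΩN.smooth x
  have dGN := aux_diff CN.smooth x
  have dφ : ∀ v, DifferentiableAt ℝ (fun y => fderiv ℝ φ y v) x := fun v =>
    d1.clm_apply (differentiableAt_const v)
  have hperp' : ∀ x u v w, Ω.ω (φ x) (fderiv ℝ φ x w) (sff x u v) = 0 := by
    intro x u v w; rw [Ω.skew, hperp, neg_zero]
  have key : ∀ u v,
      Ω.ω (φ x) (fderiv ℝ (fderiv ℝ (fderiv ℝ φ)) x u v w
        + (fderiv ℝ C.Γ (φ x) (fderiv ℝ φ x u) (fderiv ℝ φ x v) (fderiv ℝ φ x w)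
          + C.Γ (φ x) (fderiv ℝ (fderiv ℝ φ) x u v) (fderiv ℝ φ x w)
          + C.Γ (φ x) (fderiv ℝ φ x v) (fderiv ℝ (fderiv ℝ φ) x u w))
        + C.Γ (φ x) (fderiv ℝ φ x u) (fderiv ℝ (fderiv ℝ φ) x v w
            + C.Γ (φ x) (fderiv ℝ φ x v) (fderiv ℝ φ x w))) (fderiv ℝ φ x z)
      + Ω.ω (φ x) (sff x v w) (sff x u z)
      = ΩN.ω x (fderiv ℝ CN.Γ x u v w + CN.Γ x u (CN.Γ x v w)) z := by
    intro u v
    have d2v : DifferentiableAt ℝ (fun y => fderiv ℝ (fderiv ℝ φ) y v w) x :=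
      aux_diff_bilin d2 (differentiableAt_const v) (differentiableAt_const w)
    have dG : DifferentiableAt ℝ (fun y => C.Γ (φ y) (fderiv ℝ φ y v) (fderiv ℝ φ y w)) x :=
      aux_diff_bilin dΓ (dφ v) (dφ w)
    have dNv : DifferentiableAt ℝ (fun y => CN.Γ y v w) x :=
      aux_diff_bilin dGN (differentiableAt_const v) (differentiableAt_const w)
    have e : (fun y => Ω.ω (φ y) (fderiv ℝ (fderiv ℝ φ) y v w
        + C.Γ (φ y) (fderiv ℝ φ y v) (fderiv ℝ φ y w)) (fderiv ℝ φ y z))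
        = fun y => ΩN.ω y (CN.Γ y v w) z := by
      funext y
      rw [hdecomp, hΩN, map_add, _root_.add_apply, hperp, add_zero]
    have e2 := congrArg (fun f => fderiv ℝ f x u) e
    rw [aux_fderiv_bilin dΩ (d2v.fun_add dG) (dφ z), aux_fderiv_bilin dN dNv
      (differentiableAt_const z), fderiv_fun_add d2v dG, _root_.add_apply,
      aux_fderiv_bilin dΓ (dφ v) (dφ w), aux_fderiv_const2 d2, aux_fderiv_const2 dGN,
      cΩ, cΓ, hd, hd, hd, C.parallel, CN.parallel] at e2
    have e3 : Ω.ω (φ x) (fderiv ℝ (fderiv ℝ φ) x v w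
          + C.Γ (φ x) (fderiv ℝ φ x v) (fderiv ℝ φ x w))
        (fderiv ℝ (fderiv ℝ φ) x u z + C.Γ (φ x) (fderiv ℝ φ x u) (fderiv ℝ φ x z))
        = ΩN.ω x (CN.Γ x v w) (CN.Γ x u z) + Ω.ω (φ x) (sff x v w) (sff x u z) := by
      rw [hdecomp, hdecomp, hΩN]
      simp only [map_add, _root_.add_apply, hperp, hperp']
      ring
    simp only [map_add, _root_.add_apply, fderiv_fun_const, Pi.zero_apply,
      ContinuousLinearMap.zero_apply, map_zero] at e2 e3 ⊢
    linarith
  have h1 := key u v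
  have h2 := key v u
  rw [aux_symm2 s1 x v u, aux_symm2 hφ x v u] at h2
  simp only [Rlow, aux_curv_apply]
  simp only [map_add, map_sub, _root_.add_apply, _root_.sub_apply]
    at h1 h2 ⊢
  linarith

/-- A curvature-like tensor vanishing on `(X, Y, X, X)` vanishes. -/
theorem aux_zero {E : Type*} [AddCommGroup E] (S : E → E → E → E → ℝ)
    (a1 : ∀ u u' v w z, S (u + u') v w z = S u v w z + S u' v w z)
    (a3 : ∀ u v w w' z, S u v (w + w') z = S u v w z + S u v w' z)
    (anti : ∀ u v w z, S u v w z = - S v u w z)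
    (symm : ∀ u v w z, S u v w z = S u v z w)
    (bian : ∀ u v w z, S u v w z + S v w u z + S w u v z = 0)
    (h0 : ∀ X Y, S X Y X X = 0) (u v w z : E) : S u v w z = 0 := by
  have a4 : ∀ u v w z z', S u v w (z + z') = S u v w z + S u v w z' := by
    intro u v w z z'
    rw [symm, a3, symm u v z w, symm u v z' w]
  have pol : ∀ b a c d, S a b c d + S c b a d + S d b a c = 0 := by
    intro b a c d
    have h1 := h0 (a + c + d) b
    have h2 := h0 (a + c) b
    have h3 := h0 (a + d) b
    have h4 := h0 (c + d) b
    have h5 := h0 a b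
    have h6 := h0 c b
    have h7 := h0 d b
    simp only [a1, a3, a4] at h1 h2 h3 h4
    have := symm a b d c
    have := symm c b d a
    have := symm d b c a
    linarith
  have p1 := pol u v w z
  have p2 := pol v u w z
  have p3 := pol w u v z
  have p4 := pol z u v w
  have b1 := bian u v w z
  have b2 := bian u v z w
  have b3 := bian u w z v
  have b4 := bian v w z u
  have := anti u v w z
  have := anti u w v z
  have := anti u z v w
  have := anti v w u z
  have := anti v z u w
  have := anti w z u v
  have := symm u v w z
  have := symm u w v z
  have := symm u z v w
  have := symm v w u z
  have := symm v z u w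
  have := symm w z u v
  have := symm v u w z
  have := symm w u v z
  have := symm z u v w
  have := symm w v u z
  have := symm z v u w
  have := symm z w u v
  linarith

theorem aux_const {Ω : SympForm E} (C : SympConnection Ω) (x : E) (A : E →L[ℝ] E →L[ℝ] ℝ)
    (hA : ∀ u v, A u v = A v u)
    (h : ∀ X Y, Ω.ω x X Y ≠ 0 → Rlow C x X Y X X / Ω.ω x X Y = A X X) (u v w z : E) :
    Rlow C x u v w z = (1 / 4) * (Ω.ω x u w * A z v + Ω.ω x u z * A w v
      - Ω.ω x v w * A z u - Ω.ω x v z * A w u + 2 * (Ω.ω x u v * A w z)) := by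
  have r1 : ∀ u u' v w z, Rlow C x (u + u') v w z = Rlow C x u v w z + Rlow C x u' v w z := by
    intro u u' v w z
    simp only [Rlow, aux_curv_apply, map_add, map_sub, _root_.add_apply,
      _root_.sub_apply]
    ring
  have r3 : ∀ u v w w' z, Rlow C x u v (w + w') z = Rlow C x u v w z + Rlow C x u v w' z := by
    intro u v w w' z
    simp only [Rlow, map_add, _root_.add_apply]
  have r2 : ∀ u v v' w z, Rlow C x u (v + v') w z = Rlow C x u v w z + Rlow C x u v' w z := by
    intro u v v' w z
    rw [aux_R_antisymm, r1, aux_R_antisymm C x u v, aux_R_antisymm C x u v']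
    ring
  have h1 : ∀ X Y, Ω.ω x X Y ≠ 0 → Rlow C x X Y X X = Ω.ω x X Y * A X X := by
    intro X Y hXY
    rw [← h X Y hXY]; field_simp
  have h2 : ∀ X Y, Rlow C x X Y X X = Ω.ω x X Y * A X X := by
    intro X Y
    by_cases hXY : Ω.ω x X Y = 0
    · by_cases hX : X = 0
      · subst hX; simp [Rlow]
      · obtain ⟨Y', hY'⟩ : ∃ Y', Ω.ω x X Y' ≠ 0 := by
          by_contra! hc
          exact hX (Ω.nondeg x X hc)
        have e1 := h1 X Y' hY'
        have e2 := h1 X (Y + Y') (by rw [map_add, hXY, zero_add]; exact hY')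
        rw [r2, e1, map_add] at e2
        linarith
    · exact h1 X Y hXY
  have := aux_zero (fun u v w z => Rlow C x u v w z - (1 / 4) * (Ω.ω x u w * A z v
      + Ω.ω x u z * A w v
      - Ω.ω x v w * A z u - Ω.ω x v z * A w u + 2 * (Ω.ω x u v * A w z)))
    (by intro u u' v w z
        simp only [r1, map_add, _root_.add_apply]; ring)
    (by intro u v w w' z
        simp only [r3, map_add, _root_.add_apply]; ring)
    (by intro u v w z
        rw [aux_R_antisymm, Ω.skew x v u]; ring)
    (by intro u v w z
        rw [aux_R_symm, hA w z]; ring)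
    (by intro u v w z
        have := aux_R_bianchi C x u v w z
        rw [Ω.skew x v u, Ω.skew x w u, Ω.skew x w v, hA v u, hA w u, hA w v,
          hA v z, hA w z, hA u z]
        linarith)
    (by intro X Y
        have h0 : Ω.ω x X X = 0 := by have := Ω.skew x X X; linarith
        rw [h2, Ω.skew x Y X, h0]; ring)
    u v w z
  linarith

theorem aux_trace_adj {F : Type*} [AddCommGroup F] [Module ℝ F] [FiniteDimensional ℝ F]
    (L : F ≃ₗ[ℝ] Module.Dual ℝ F) (B B' : F →ₗ[ℝ] F)
    (h : ∀ w z, L (B' w) z = L w (B z)) : LinearMap.trace ℝ F B' = LinearMap.trace ℝ F B := by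
  have e : L.conj B' = Module.Dual.transpose (R := ℝ) B := by
    apply LinearMap.ext
    intro f
    apply LinearMap.ext
    intro z
    have := h (L.symm f) z
    rw [L.apply_symm_apply] at this
    exact this
  rw [← LinearMap.trace_conj' B' L, e, LinearMap.trace_transpose']

theorem aux_trace_model [FiniteDimensional ℝ F] (ω : F →L[ℝ] F →L[ℝ] ℝ)
    (skew : ∀ u v, ω u v = - ω v u) (nondeg : ∀ u, (∀ v, ω u v = 0) → u = 0)
    (A : F →ₗ[ℝ] F →ₗ[ℝ] ℝ) (hA : ∀ u v, A u v = A v u) (u v : F) (Q D : F →ₗ[ℝ] F)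
    (S : F → F → ℝ) (hS : ∀ w z, S w z = S z w)
    (hQ : ∀ w z, (1 / 4) * (ω w v * A z u + ω w z * A v u
      - ω u v * A z w - ω u z * A v w + 2 * (ω w u * A v z))
      = ω (Q w) z - S w z - ω (D z) w) :
    ((Module.finrank ℝ F : ℝ) + 2) / 4 * A u v = LinearMap.trace ℝ F Q + LinearMap.trace ℝ F D := by
  let L0 : F →ₗ[ℝ] Module.Dual ℝ F :=
    { toFun := fun u => (ω u).toLinearMap
      map_add' := by intro a b; ext; simp
      map_smul' := by intro a b; ext; simp }
  have hL0 : ∀ u v, L0 u v = ω u v := fun _ _ => rfl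
  have inj : Function.Injective L0 := by
    rw [← LinearMap.ker_eq_bot, LinearMap.ker_eq_bot']
    intro m hm
    apply nondeg
    intro v
    rw [← hL0, hm]; rfl
  let L : F ≃ₗ[ℝ] Module.Dual ℝ F :=
    LinearMap.linearEquivOfInjective L0 inj (Subspace.dual_finrank_eq).symm
  have hL : ∀ u v, L u v = ω u v := fun _ _ => rfl
  have sym0 : ∀ B : F →ₗ[ℝ] F, (∀ w z, ω (B w) z = ω (B z) w) → LinearMap.trace ℝ F B = 0 := by
    intro B hB
    have := aux_trace_adj L (-B) B (by
      intro w z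
      rw [hL, hL, hB, skew]
      simp)
    rw [map_neg] at this
    linarith
  let a : F →ₗ[ℝ] F := L.symm.toLinearMap ∘ₗ A
  have ha : ∀ u z, ω (a u) z = A u z := by
    intro u z
    rw [← hL]; simp [a]
  let D' : F →ₗ[ℝ] F := L.symm.toLinearMap ∘ₗ (Module.Dual.transpose (R := ℝ) D) ∘ₗ L.toLinearMap
  have hD' : ∀ w z, ω (D' w) z = ω w (D z) := by
    intro w z
    rw [← hL, ← hL]
    exact DFunLike.congr_fun (L.apply_symm_apply (Module.Dual.transpose (R := ℝ) D (L w))) z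
  have tD' : LinearMap.trace ℝ F D' = LinearMap.trace ℝ F D := aux_trace_adj L D D' hD'
  have ta : LinearMap.trace ℝ F a = 0 := sym0 a (by intro w z; rw [ha, ha, hA])
  let K : F →ₗ[ℝ] F := (1 / 4 : ℝ) • (-((L v).smulRight (a u)) + (A v u) • LinearMap.id
    - (ω u v) • a - (A v).smulRight u - (2 : ℝ) • ((L u).smulRight (a v)))
  have hK : ∀ w z, ω (K w) z = (1 / 4) * (ω w v * A z u + ω w z * A v u
      - ω u v * A z w - ω u z * A v w + 2 * (ω w u * A v z)) := by
    intro w z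
    simp only [K, LinearMap.smul_apply, LinearMap.add_apply, LinearMap.sub_apply,
      LinearMap.neg_apply, LinearMap.smulRight_apply, LinearMap.id_apply, map_add, map_sub,
      map_neg, map_smul, _root_.add_apply, _root_.sub_apply,
      _root_.neg_apply, _root_.smul_apply, ha, hL, smul_eq_mul]
    rw [skew w v, skew w u, hA z u, hA z w]
    ring
  have tB : LinearMap.trace ℝ F (Q + D' - K) = 0 := by
    apply sym0
    have : ∀ w z, ω ((Q + D' - K) w) z = S w z := by
      intro w z
      simp only [LinearMap.add_apply, LinearMap.sub_apply, map_add, map_sub,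
        _root_.add_apply, _root_.sub_apply, hK, hQ, hD']
      rw [skew w (D z)]; ring
    intro w z
    rw [this, this, hS]
  have tK : LinearMap.trace ℝ F K = ((Module.finrank ℝ F : ℝ) + 2) / 4 * A u v := by
    simp only [K, map_add, map_sub, map_neg, map_smul, LinearMap.trace_smulRight, ta,
      LinearMap.trace_id, hL, smul_eq_mul]
    rw [skew v, skew u (a v), ha, ha, hA v u]
    ring
  rw [map_sub, map_add, tD', tK] at tB
  linarith

theorem aux_ricci {Ω : SympForm E} (C : SympConnection Ω) (x u v : E) :
    ∃ Q : E →ₗ[ℝ] E, ricci C x u v = LinearMap.trace ℝ E Q ∧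
      ∀ w z, Ω.ω x (Q w) z = Rlow C x w u v z := by
  refine ⟨_, rfl, ?_⟩
  intro w z
  rw [Rlow, aux_curv_apply]
  simp

end Helpers

/-- Let `φ : N → M` be a smooth symplectic immersion of a `2k`-dimensional
manifold into the `2n`-dimensional symplectic manifold `(M, Ω)` equipped with a symplectic
connection `C` of constant symplectic sectional curvature, and let `CN` be the induced
symplectic connection on `(N, φ^*(Ω))`, with second fundamental form `sff`.  Then
`(k+1)·φ^*(Ric^∇) = (n+1)·(Ric^{∇̄} + smc)`, where `smc(u,v) = ω^{ab}Ω_{AB}Π_{ua}{}^AΠ_{vb}{}^B`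
is encoded as the trace of any linear packaging `D` with
`ω(D a, b) = Ω(Π(u,a), Π(v,b))` (which exists and is unique by nondegeneracy of `ω = φ^*Ω`).
In particular, if `smc = 0` then `Ric^{∇̄} = ((k+1)/(n+1))·φ^*(Ric^∇)`. -/
theorem statement_13 {E F : Type*}
    [NormedAddCommGroup E] [NormedSpace ℝ E] [FiniteDimensional ℝ E]
    [NormedAddCommGroup F] [NormedSpace ℝ F] [FiniteDimensional ℝ F]
    (n k : ℕ) (hdimE : Module.finrank ℝ E = 2 * n) (hdimF : Module.finrank ℝ F = 2 * k)
    (Ω : SympForm E) (C : SympConnection Ω)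
    (φ : F → E) (hφ : ContDiff ℝ (⊤ : ℕ∞) φ)
    (ΩN : SympForm F)
    (hΩN : ∀ x u v, ΩN.ω x u v = Ω.ω (φ x) (fderiv ℝ φ x u) (fderiv ℝ φ x v))
    (CN : SympConnection ΩN)
    (sff : F → F → F → E)
    (hdecomp : ∀ x u v,
      fderiv ℝ (fun y => fderiv ℝ φ y v) x u
        + C.Γ (φ x) (fderiv ℝ φ x u) (fderiv ℝ φ x v)
      = fderiv ℝ φ x (CN.Γ x u v) + sff x u v)
    (hperp : ∀ x u v w, Ω.ω (φ x) (sff x u v) (fderiv ℝ φ x w) = 0)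
    (hconst : HasConstScurv C) :
    ∀ x u v, ∀ D : F →ₗ[ℝ] F,
      (∀ a b, ΩN.ω x (D a) b = Ω.ω (φ x) (sff x u a) (sff x v b)) →
      (((k : ℝ) + 1) * ricci C (φ x) (fderiv ℝ φ x u) (fderiv ℝ φ x v)
          = ((n : ℝ) + 1) * (ricci CN x u v + LinearMap.trace ℝ F D))
      ∧ (LinearMap.trace ℝ F D = 0 →
          ((n : ℝ) + 1) * ricci CN x u v
            = ((k : ℝ) + 1) * ricci C (φ x) (fderiv ℝ φ x u) (fderiv ℝ φ x v)) := by
  obtain ⟨A, ⟨hAs, -, -⟩, hsc⟩ := hconst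
  intro x u v D hD
  have hR := aux_const C (φ x) (A (φ x)) (hAs (φ x)) (by
    intro X Y hXY
    exact hsc (φ x) X Y hXY X (Submodule.subset_span (by simp)))
  have s1 : ContDiff ℝ (⊤ : ℕ∞) (fderiv ℝ φ) := aux_diff_fderiv hφ
  have hsym : ∀ a b, sff x a b = sff x b a := by
    intro a b
    have e1 := hdecomp x a b
    have e2 := hdecomp x b a
    rw [aux_fderiv_const (aux_diff s1 x)] at e1 e2
    rw [aux_symm2 hφ x b a, C.symm (φ x) (fderiv ℝ φ x b), CN.symm x b a, e1] at e2
    exact add_left_cancel e2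
  obtain ⟨Q, hQ1, hQ2⟩ := aux_ricci C (φ x) (fderiv ℝ φ x u) (fderiv ℝ φ x v)
  obtain ⟨QN, hQN1, hQN2⟩ := aux_ricci CN x u v
  have hM := aux_trace_model (Ω.ω (φ x)) (Ω.skew (φ x)) (Ω.nondeg (φ x))
    (LinearMap.mk₂ ℝ (fun a b => A (φ x) a b) (by simp) (by simp) (by simp) (by simp))
    (hAs (φ x)) (fderiv ℝ φ x u) (fderiv ℝ φ x v) Q 0 (fun _ _ => 0) (fun _ _ => rfl) (by
      intro w z
      rw [hQ2, hR]
      simp)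
  have hN := aux_trace_model (ΩN.ω x) (ΩN.skew x) (ΩN.nondeg x)
    (LinearMap.mk₂ ℝ (fun a b => A (φ x) (fderiv ℝ φ x a) (fderiv ℝ φ x b))
      (by simp) (by simp) (by simp) (by simp))
    (fun a b => hAs (φ x) _ _) u v QN D
    (fun w z => Ω.ω (φ x) (sff x u v) (sff x w z)) (fun w z => by rw [hsym w z]) (by
      intro w z
      have g := aux_gauss C φ hφ ΩN hΩN CN sff hdecomp hperp x w u v z
      rw [hR] at g
      rw [hQN2, hD, Ω.skew (φ x) (sff x u z), hsym v w]
      simp only [LinearMap.mk₂_apply, hΩN]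
      linarith)
  simp only [LinearMap.mk₂_apply, map_zero, add_zero, hdimE, hdimF] at hM hN
  push_cast at hM hN
  rw [hQ1, hQN1, ← hM, ← hN]
  refine ⟨by ring, fun h0 => ?_⟩
  rw [h0, add_zero] at hN
  rw [← hN]
  ring
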